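/- Let μ ∈ ℝ, set α := −iμ/2, and let u : ℝ → ℂ be a smooth solution of the PII equation u''(x) = x·u(x) + 2·u(x)³ − α on ℝ, taking purely imaginary values on ℝ and satisfying the asymptotic expansion (A+): there exist x₀, K > 0 such that |u(x) − α/x − 2α(1−α²)·x^{−4} − 4α(1−α²)(10−3α²)·x^{−7}| ≤ K·x^{−10} for all x ≥ x₀. Define w(x) := ∫₀ˣ exp( (2/3^{1/3}) ∫₀^y u(z/3^{1/3}) dz ) dy − C with C := (2·3^{1/3}/(1−iμ))·(u'(0) − u(0)²), g(x) := e^{iμ·ln|x|}·w(x)/x for x ≠ 0, and let g₊ := lim_{x→+∞} g(x) (which exists). Then w'(x)·e^{iμ·ln x} = (1−iμ)·g₊ + (2+iμ)·(1−iμ)·g₊·(iμ + μ²/2)·x^{−3} + O(x^{−6}) as x → +∞. -/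

import Mathlib

/-- The real cube root of 3. -/
noncomputable def cbrt3 : ℝ := (3 : ℝ) ^ ((1:ℝ)/3)

/-!
The exponent `φ` with `w' = exp φ` has derivative `φ' x = (2/c) u (x/c)`, `c = 3^{1/3}`, so the
expansion of `u` gives `φ' x = -iμ/x + O(x⁻⁴)` with an explicit `x⁻⁴` term and remainder `O(x⁻⁷)`.
Integrating from infinity, `φ x + iμ ln x = L + b x⁻³ + O(x⁻⁶)` with `b = (2 + iμ)(iμ + μ²/2)` and
an unknown constant `L`; exponentiating, `w' x e^{iμ ln x} = A (1 + b x⁻³) + O(x⁻⁶)` with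
`A = e^L`. In particular `x^{iμ} w' x → A`, and integrating this asymptotic relation shows
`x^{iμ - 1} w x → A / (1 - iμ)`, which identifies `A` as `(1 - iμ) g₊`. The constant of integration
in `w` is negligible in the last step because `|x^{1 - iμ}| → ∞`.
-/

open Filter Topology Asymptotics

section RealPowers

variable {E : Type*} [NormedAddCommGroup E] [NormedSpace ℝ E] {F F' : ℝ → E} {r : ℝ}

lemma norm_sub_le_of_norm_deriv_le_rpow {a K : ℝ} (ha : 0 < a) (hr : r ≠ 0)
    (hF : ∀ x, a ≤ x → HasDerivAt F (F' x) x) (hF' : ∀ x, a ≤ x → ‖F' x‖ ≤ K * x ^ (r - 1))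
    {x y : ℝ} (hx : a ≤ x) (hxy : x ≤ y) : ‖F y - F x‖ ≤ K / r * (y ^ r - x ^ r) := by
  have hB : ∀ t ∈ Set.Icc x y,
      HasDerivAt (fun t ↦ K / r * (t ^ r - x ^ r)) (K * t ^ (r - 1)) t := fun t ht ↦ by
    have ht0 : t ≠ 0 := (ha.trans_le (hx.trans ht.1)).ne'
    refine (((Real.hasDerivAt_rpow_const (.inl ht0)).sub_const _).const_mul (K / r)).congr_deriv ?_
    field_simp
  have hFx : ∀ t ∈ Set.Icc x y, HasDerivAt (fun t ↦ F t - F x) (F' t) t := fun t ht ↦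
    (hF t (hx.trans ht.1)).sub_const _
  exact image_norm_le_of_norm_deriv_right_le_deriv_boundary'
    (fun t ht ↦ (hFx t ht).continuousAt.continuousWithinAt)
    (fun t ht ↦ (hFx t (Set.Ico_subset_Icc_self ht)).hasDerivWithinAt)
    (by simp)
    (fun t ht ↦ (hB t ht).continuousAt.continuousWithinAt)
    (fun t ht ↦ (hB t (Set.Ico_subset_Icc_self ht)).hasDerivWithinAt)
    (fun t ht ↦ hF' t (hx.trans ht.1)) (Set.right_mem_Icc.2 hxy)

lemma exists_norm_sub_le_of_eventually_norm_deriv_le_rpow {K : ℝ} (hr : r ≠ 0)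
    (hF : ∀ᶠ x in atTop, HasDerivAt F (F' x) x)
    (hF' : ∀ᶠ x in atTop, ‖F' x‖ ≤ K * ‖x ^ (r - 1)‖) :
    ∃ a > 0, ∀ x y, a ≤ x → x ≤ y → ‖F y - F x‖ ≤ K / r * (y ^ r - x ^ r) := by
  obtain ⟨a, ha⟩ := eventually_atTop.1 ((eventually_gt_atTop 0).and (hF.and hF'))
  refine ⟨a, (ha a le_rfl).1, fun x y hx hxy ↦ norm_sub_le_of_norm_deriv_le_rpow
    (ha a le_rfl).1 hr (fun t ht ↦ (ha t ht).2.1) (fun t ht ↦ ?_) hx hxy⟩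
  obtain ⟨ht0, -, h⟩ := ha t ht
  rwa [Real.norm_of_nonneg (by positivity)] at h

lemma isLittleO_rpow_of_deriv (hr : 0 < r) (hF : ∀ᶠ x in atTop, HasDerivAt F (F' x) x)
    (hF' : F' =o[atTop] fun x ↦ x ^ (r - 1)) : F =o[atTop] fun x ↦ x ^ r := by
  refine IsLittleO.of_bound fun ε hε ↦ ?_
  obtain ⟨a, ha, h⟩ := exists_norm_sub_le_of_eventually_norm_deriv_le_rpow
    hr.ne' hF (hF'.def (show 0 < r * (ε / 2) by positivity))
  have hconst : (fun _ : ℝ ↦ F a) =o[atTop] fun x : ℝ ↦ x ^ r :=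
    isLittleO_const_left.2 <| .inr <| tendsto_norm_atTop_atTop.comp (tendsto_rpow_atTop hr)
  filter_upwards [eventually_ge_atTop a, hconst.def (half_pos hε)] with x hx hFa
  have hx0 : 0 < x := ha.trans_le hx
  rw [Real.norm_of_nonneg (by positivity)] at hFa ⊢
  have hsub : ‖F x - F a‖ ≤ ε / 2 * x ^ r := calc
    ‖F x - F a‖ ≤ r * (ε / 2) / r * (x ^ r - a ^ r) := h a x le_rfl hx
    _ = ε / 2 * (x ^ r - a ^ r) := by field_simp
    _ ≤ ε / 2 * x ^ r := by
      have : 0 ≤ a ^ r := by positivity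
      gcongr
      linarith
  linarith [norm_le_norm_sub_add (F x) (F a)]

lemma exists_isBigO_sub_rpow_of_deriv [CompleteSpace E] (hr : r < 0)
    (hF : ∀ᶠ x in atTop, HasDerivAt F (F' x) x) (hF' : F' =O[atTop] fun x ↦ x ^ (r - 1)) :
    ∃ L, (fun x ↦ F x - L) =O[atTop] fun x ↦ x ^ r := by
  obtain ⟨K, hK, hbound⟩ := hF'.exists_pos
  obtain ⟨a, ha, h⟩ := exists_norm_sub_le_of_eventually_norm_deriv_le_rpow hr.ne hF hbound.bound
  have htail : ∀ x y, a ≤ x → x ≤ y → ‖F y - F x‖ ≤ K / -r * x ^ r := fun x y hx hxy ↦ by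
    have hy : 0 ≤ K / -r * y ^ r :=
      mul_nonneg (div_nonneg hK.le (by linarith)) (Real.rpow_nonneg (ha.le.trans (hx.trans hxy)) r)
    have hxy' := h x y hx hxy
    rw [div_neg] at hy ⊢
    linarith
  have hlim : Tendsto (fun x : ℝ ↦ K / -r * x ^ r) atTop (𝓝 0) := by
    simpa using (tendsto_rpow_neg_atTop (neg_pos.2 hr)).const_mul (K / -r)
  have hcauchy : CauchySeq F := Metric.cauchySeq_iff'.2 fun ε hε ↦ by
    obtain ⟨N, haN, hN⟩ := ((eventually_ge_atTop a).and (hlim.eventually_lt_const hε)).exists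
    exact ⟨N, fun x hx ↦ (dist_eq_norm (F x) (F N)).trans_lt ((htail N x haN hx).trans_lt hN)⟩
  obtain ⟨L, hL⟩ := cauchySeq_tendsto_of_complete hcauchy
  refine ⟨L, IsBigO.of_bound (K / -r) ?_⟩
  filter_upwards [eventually_ge_atTop a] with x hx
  rw [Real.norm_of_nonneg (Real.rpow_nonneg (ha.le.trans hx) r), norm_sub_rev]
  refine le_of_tendsto (hL.sub_const (F x)).norm ?_
  filter_upwards [eventually_ge_atTop x] with y hy using htail x y hx hy

end RealPowers

section ComplexPowers

lemma ofReal_cpow_eq_exp_mul_log {x : ℝ} (hx : 0 < x) (p : ℂ) :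
    (x : ℂ) ^ p = Complex.exp (p * Real.log x) := by
  rw [Complex.cpow_def_of_ne_zero (mod_cast hx.ne'), Complex.ofReal_log hx.le, mul_comm]

lemma isBigO_ofReal_cpow_rpow_re (p : ℂ) :
    (fun x : ℝ ↦ (x : ℂ) ^ p) =O[atTop] fun x : ℝ ↦ x ^ p.re := by
  refine IsBigO.of_bound' ?_
  filter_upwards [eventually_gt_atTop 0] with x hx
  rw [Complex.norm_cpow_eq_rpow_re_of_pos hx]
  exact le_abs_self _

lemma tendsto_cpow_sub_one_smul_of_tendsto_deriv {E : Type*} [NormedAddCommGroup E]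
    [NormedSpace ℂ E] {w w' : ℝ → E} {p : ℂ} {A : E} (hp : p.re < 1)
    (hw : ∀ᶠ x in atTop, HasDerivAt w (w' x) x)
    (hA : Tendsto (fun x : ℝ ↦ (x : ℂ) ^ p • w' x) atTop (𝓝 A)) :
    Tendsto (fun x : ℝ ↦ (x : ℂ) ^ (p - 1) • w x) atTop (𝓝 ((1 - p)⁻¹ • A)) := by
  have hp1 : 1 - p ≠ 0 := fun h ↦ by simp [← sub_eq_zero.1 h] at hp
  -- Subtracting the exact power `x^(1-p) A/(1-p)` leaves a derivative of size `o(x^(-Re p))`, whose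
  -- primitives are `o(x^(1 - Re p))` because `Re p < 1`.
  have hv : ∀ᶠ x : ℝ in atTop, HasDerivAt (fun x : ℝ ↦ w x - (x : ℂ) ^ (1 - p) • (1 - p)⁻¹ • A)
      ((x : ℂ) ^ (-p) • ((x : ℂ) ^ p • w' x - A)) x := by
    filter_upwards [hw, eventually_ne_atTop 0] with x hwx hx
    have hxc : (x : ℂ) ≠ 0 := mod_cast hx
    refine (hwx.sub ((hasDerivAt_ofReal_cpow_const hx hp1).smul_const _)).congr_deriv ?_
    rw [smul_sub, smul_smul, smul_smul, ← Complex.cpow_add _ _ hxc, neg_add_cancel,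
      Complex.cpow_zero, one_smul, mul_right_comm, mul_inv_cancel₀ hp1, one_mul,
      show 1 - p - 1 = -p by ring]
  have hv' : (fun x : ℝ ↦ (x : ℂ) ^ (-p) • ((x : ℂ) ^ p • w' x - A)) =o[atTop]
      fun x : ℝ ↦ x ^ ((1 - p.re) - 1) := by
    simpa using (isBigO_ofReal_cpow_rpow_re (-p)).smul_isLittleO
      ((isLittleO_one_iff ℝ).2 (tendsto_sub_nhds_zero_iff.2 hA))
  have hlim : Tendsto (fun x : ℝ ↦ (x : ℂ) ^ (p - 1) •
      (w x - (x : ℂ) ^ (1 - p) • (1 - p)⁻¹ • A)) atTop (𝓝 0) := by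
    refine (isLittleO_one_iff ℝ).1 <| ((isBigO_ofReal_cpow_rpow_re (p - 1)).smul_isLittleO
      (isLittleO_rpow_of_deriv (sub_pos.2 hp) hv hv')).congr' .rfl ?_
    filter_upwards [eventually_gt_atTop 0] with x hx
    rw [smul_eq_mul, ← Real.rpow_add hx]
    simp
  refine tendsto_sub_nhds_zero_iff.1 (hlim.congr' ?_)
  filter_upwards [eventually_ne_atTop 0] with x hx
  have hxc : (x : ℂ) ≠ 0 := mod_cast hx
  rw [smul_sub, smul_smul, ← Complex.cpow_add _ _ hxc]
  simp

end ComplexPowers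

lemma isBigO_cexp_sub_exp_mul_one_add {ι : Type*} {l : Filter ι} {f z : ι → ℂ} {ψ : ι → ℝ} {L : ℂ}
    (hψ : Tendsto ψ l (𝓝 0)) (hz : z =O[l] ψ)
    (hf : (fun x ↦ f x - L - z x) =O[l] (fun x ↦ ψ x ^ 2)) :
    (fun x ↦ Complex.exp (f x) - Complex.exp L * (1 + z x)) =O[l] (fun x ↦ ψ x ^ 2) := by
  have hψ2 : (fun x ↦ ψ x ^ 2) =O[l] ψ := by
    simpa [pow_two] using (hψ.isBigO_one ℝ).mul (isBigO_refl ψ l)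
  have hδ : (fun x ↦ f x - L) =O[l] ψ := by
    simpa using (hf.trans hψ2).add hz
  have hexp : (fun x ↦ Complex.exp (f x - L) - 1 - (f x - L)) =O[l] (fun x ↦ ψ x ^ 2) := by
    simpa [Finset.sum_range_succ, sub_sub, Function.comp_def] using
      ((Complex.exp_sub_sum_range_isBigO_pow 2).comp_tendsto (hδ.trans_tendsto hψ)).trans
        (hδ.pow 2)
  refine ((hexp.add hf).const_mul_left (Complex.exp L)).congr_left fun x ↦ ?_
  rw [← add_sub_cancel L (f x), Complex.exp_add]
  ring_nf

section IntegerPowers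

lemma isBigO_zpow_atTop_iff {E : Type*} [NormedAddCommGroup E] {f : ℝ → E} {n : ℤ} :
    f =O[atTop] (fun x ↦ x ^ n) ↔
      ∃ x₀ : ℝ, 0 < x₀ ∧ ∃ K : ℝ, 0 < K ∧ ∀ x : ℝ, x₀ ≤ x → ‖f x‖ ≤ K * x ^ n := by
  constructor
  · intro h
    obtain ⟨K, hK, hbound⟩ := h.exists_pos
    obtain ⟨x₀, hx₀⟩ := eventually_atTop.1 ((eventually_gt_atTop 0).and hbound.bound)
    refine ⟨x₀, (hx₀ x₀ le_rfl).1, K, hK, fun x hx ↦ ?_⟩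
    obtain ⟨hx0, hfx⟩ := hx₀ x hx
    rwa [Real.norm_of_nonneg (by positivity)] at hfx
  · rintro ⟨x₀, -, K, hK, h⟩
    refine IsBigO.of_bound K ?_
    filter_upwards [eventually_ge_atTop x₀] with x hx
    exact (h x hx).trans (mul_le_mul_of_nonneg_left (le_abs_self _) hK.le)

lemma isBigO_const_mul_ofReal_zpow (d : ℂ) (m : ℤ) (l : Filter ℝ) :
    (fun x : ℝ ↦ d * (x : ℂ) ^ m) =O[l] fun x ↦ x ^ m :=
  (isBigO_of_le l fun x ↦ by simp).const_mul_left d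

lemma isBigO_zpow_of_sub_const_mul_zpow {f : ℝ → ℂ} {d : ℂ} {m n : ℤ} (hnm : n ≤ m)
    (h : (fun x ↦ f x - d * (x : ℂ) ^ m) =O[atTop] fun x : ℝ ↦ x ^ n) :
    f =O[atTop] fun x : ℝ ↦ x ^ m := by
  have hpow : (fun x : ℝ ↦ x ^ n) =O[atTop] fun x : ℝ ↦ x ^ m := by
    refine IsBigO.of_bound' ?_
    filter_upwards [eventually_ge_atTop 1] with x hx
    rw [Real.norm_of_nonneg (by positivity), Real.norm_of_nonneg (by positivity)]
    exact zpow_le_zpow_right₀ hx hnm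
  simpa using (h.trans hpow).add (isBigO_const_mul_ofReal_zpow d m atTop)

lemma isBigO_comp_div_of_isBigO_zpow {u : ℝ → ℂ} {a b : ℂ} {c : ℝ} (hc : 0 < c) {m n : ℤ}
    (hu : (fun x : ℝ ↦ u x - a / x - b * (x : ℂ) ^ m) =O[atTop] fun x : ℝ ↦ x ^ n) :
    (fun x : ℝ ↦ (c : ℂ)⁻¹ * u (x / c) - a / x - b * (c : ℂ) ^ (-m - 1) * (x : ℂ) ^ m)
      =O[atTop] fun x : ℝ ↦ x ^ n := by
  have hcc : (c : ℂ) ≠ 0 := mod_cast hc.ne'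
  have hscale : (fun x : ℝ ↦ (x / c) ^ n) =O[atTop] fun x : ℝ ↦ x ^ n := by
    simp only [div_eq_mul_inv, mul_zpow, mul_comm _ (c⁻¹ ^ n)]
    exact isBigO_const_mul_self _ _ _
  refine (((hu.comp_tendsto (tendsto_id.atTop_div_const hc)).trans hscale).const_mul_left
    (c : ℂ)⁻¹).congr_left fun x ↦ ?_
  simp only [Function.comp_apply, id, Complex.ofReal_div, div_zpow, zpow_sub₀ hcc, zpow_neg,
    zpow_one]
  field_simp

variable {φ φ' : ℝ → ℂ} {a b : ℂ} {m : ℤ}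

lemma exists_isBigO_sub_log_of_deriv {n : ℤ} (hn : n < 0)
    (hφ : ∀ᶠ x in atTop, HasDerivAt φ (φ' x) x)
    (hφ' : (fun x : ℝ ↦ φ' x - a / x - m * b * (x : ℂ) ^ (m - 1)) =O[atTop]
      fun x : ℝ ↦ x ^ (n - 1)) :
    ∃ L, (fun x : ℝ ↦ φ x - a * Real.log x - L - b * (x : ℂ) ^ m) =O[atTop]
      fun x : ℝ ↦ x ^ n := by
  have hderiv : ∀ᶠ x : ℝ in atTop, HasDerivAt (fun x : ℝ ↦ φ x - a * Real.log x - b * (x : ℂ) ^ m)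
      (φ' x - a / x - m * b * (x : ℂ) ^ (m - 1)) x := by
    filter_upwards [hφ, eventually_ne_atTop 0] with x hφx hx
    have hlog := (Real.hasDerivAt_log hx).ofReal_comp.const_mul a
    have hzpow := (hasDerivAt_zpow m (x : ℂ) (.inl (mod_cast hx))).comp_ofReal.const_mul b
    refine ((hφx.sub hlog).sub hzpow).congr_deriv ?_
    push_cast
    ring
  obtain ⟨L, hL⟩ := exists_isBigO_sub_rpow_of_deriv (r := n) (mod_cast hn) hderiv
    (mod_cast hφ')
  refine ⟨L, ?_⟩
  simpa only [Real.rpow_intCast, sub_right_comm _ L] using hL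

lemma exists_isBigO_cexp_mul_cpow (hm : m < 0) (hφ : ∀ᶠ x in atTop, HasDerivAt φ (φ' x) x)
    (hφ' : (fun x : ℝ ↦ φ' x - a / x - m * b * (x : ℂ) ^ (m - 1)) =O[atTop]
      fun x : ℝ ↦ x ^ (2 * m - 1)) :
    ∃ A, (fun x : ℝ ↦ Complex.exp (φ x) * (x : ℂ) ^ (-a) - A * (1 + b * (x : ℂ) ^ m)) =O[atTop]
      fun x : ℝ ↦ x ^ (2 * m) := by
  obtain ⟨L, hL⟩ := exists_isBigO_sub_log_of_deriv (by omega) hφ hφ'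
  have hsq : (fun x : ℝ ↦ x ^ (2 * m)) = fun x ↦ (x ^ m) ^ 2 := by
    ext x
    simp [mul_comm 2 m, zpow_mul]
  rw [hsq] at hL ⊢
  refine ⟨Complex.exp L, (isBigO_cexp_sub_exp_mul_one_add
    (tendsto_zpow_atTop_zero hm) (isBigO_const_mul_ofReal_zpow b m atTop) hL).congr' ?_ .rfl⟩
  filter_upwards [eventually_gt_atTop 0] with x hx
  rw [ofReal_cpow_eq_exp_mul_log hx, ← Complex.exp_add, neg_mul, ← sub_eq_add_neg]

theorem isBigO_deriv_mul_cpow_of_tendsto (ha : -1 < a.re) (hm : m < 0) {w : ℝ → ℂ} {G : ℂ}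
    (hw : ∀ᶠ x in atTop, HasDerivAt w (Complex.exp (φ x)) x)
    (hφ : ∀ᶠ x in atTop, HasDerivAt φ (φ' x) x)
    (hφ' : (fun x : ℝ ↦ φ' x - a / x - m * b * (x : ℂ) ^ (m - 1)) =O[atTop]
      fun x : ℝ ↦ x ^ (2 * m - 1))
    (hG : Tendsto (fun x : ℝ ↦ (x : ℂ) ^ (-a) * w x / x) atTop (𝓝 G)) :
    (fun x : ℝ ↦ deriv w x * (x : ℂ) ^ (-a) - (1 + a) * G * (1 + b * (x : ℂ) ^ m)) =O[atTop]
      fun x : ℝ ↦ x ^ (2 * m) := by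
  obtain ⟨A, hA⟩ := exists_isBigO_cexp_mul_cpow hm hφ hφ'
  have hmodel : Tendsto (fun x : ℝ ↦ A * (1 + b * (x : ℂ) ^ m)) atTop (𝓝 A) := by
    simpa using (((Complex.continuous_ofReal.tendsto 0).comp
      (tendsto_zpow_atTop_zero hm)).const_mul b).const_add 1 |>.const_mul A
  have hlim : Tendsto (fun x : ℝ ↦ (x : ℂ) ^ (-a) • Complex.exp (φ x)) atTop (𝓝 A) := by
    simpa [mul_comm] using
      (hA.trans_tendsto (tendsto_zpow_atTop_zero (by omega))).add hmodel
  have hG' := tendsto_cpow_sub_one_smul_of_tendsto_deriv (by simpa [neg_lt] using ha) hw hlim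
  have ha1 : 1 + a ≠ 0 := fun h ↦ by simp [eq_neg_of_add_eq_zero_right h] at ha
  have hAG : A = (1 + a) * G := by
    have : G = (1 - -a)⁻¹ • A := by
      refine tendsto_nhds_unique (hG.congr' ?_) hG'
      filter_upwards [eventually_ne_atTop 0] with x hx
      rw [Complex.cpow_sub _ _ (mod_cast hx), Complex.cpow_one, smul_eq_mul]
      ring
    rw [this, sub_neg_eq_add, smul_eq_mul, mul_inv_cancel_left₀ ha1]
  refine hA.congr' ?_ .rfl
  filter_upwards [hw] with x hx
  rw [hx.deriv, hAG]

end IntegerPowers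

lemma cbrt3_pos : 0 < cbrt3 := Real.rpow_pos_of_pos three_pos _

lemma cbrt3_pow_three : cbrt3 ^ 3 = 3 := by
  rw [cbrt3, one_div]
  exact Real.rpow_inv_natCast_pow zero_le_three three_ne_zero

-- Coefficients and exponents have the shape `m * b * x^(m-1)` and `x^(2m-1)` with `m = -3`.
lemma isBigO_two_div_cbrt3_mul_comp_div_sub {α : ℂ} {u : ℝ → ℂ}
    (hAp : (fun x : ℝ ↦ u x - α / x - 2 * α * (1 - α ^ 2) * (x : ℂ) ^ (-4 : ℤ)) =O[atTop]
      fun x : ℝ ↦ x ^ (-7 : ℤ)) :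
    (fun x : ℝ ↦ ((2 / cbrt3 : ℝ) : ℂ) * u (x / cbrt3) - 2 * α / x
        - (-3 : ℤ) * (-4 * α * (1 - α ^ 2)) * (x : ℂ) ^ (-3 - 1 : ℤ)) =O[atTop]
      fun x : ℝ ↦ x ^ (2 * -3 - 1 : ℤ) := by
  have hcube : (cbrt3 : ℂ) ^ (-(-4) - 1 : ℤ) = 3 := mod_cast cbrt3_pow_three
  refine ((isBigO_comp_div_of_isBigO_zpow cbrt3_pos hAp).const_mul_left 2).congr_left fun x ↦ ?_
  rw [hcube]
  push_cast
  ring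

theorem stmt_8_general {μ α : ℂ} (hμ : -1 < μ.im) (hα : α = -Complex.I * μ / 2)
    {u : ℝ → ℂ} (hu : Continuous u)
    (hAp : (fun x : ℝ ↦ u x - α / x - 2 * α * (1 - α ^ 2) * (x : ℂ) ^ (-4 : ℤ)) =O[atTop]
      fun x : ℝ ↦ x ^ (-7 : ℤ))
    {C : ℂ} {w : ℝ → ℂ}
    (hw : ∀ x : ℝ, w x =
      (∫ y in (0:ℝ)..x, Complex.exp (((2 / cbrt3 : ℝ) : ℂ) *
        ∫ z in (0:ℝ)..y, u (z / cbrt3))) - C)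
    {gp : ℂ} (hgp : Tendsto (fun x : ℝ ↦ Complex.exp (Complex.I * μ * Real.log x) * w x / x)
      atTop (𝓝 gp)) :
    (fun x : ℝ ↦ deriv w x * Complex.exp (Complex.I * μ * Real.log x)
        - (1 - Complex.I * μ) * gp
        - (2 + Complex.I * μ) * (1 - Complex.I * μ) * gp *
            (Complex.I * μ + μ ^ 2 / 2) * (x : ℂ) ^ (-3 : ℤ)) =O[atTop]
      fun x : ℝ ↦ x ^ (-6 : ℤ) := by
  set φ : ℝ → ℂ := fun y ↦ ((2 / cbrt3 : ℝ) : ℂ) * ∫ z in (0:ℝ)..y, u (z / cbrt3)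
  have hφ (x : ℝ) : HasDerivAt φ (((2 / cbrt3 : ℝ) : ℂ) * u (x / cbrt3)) x :=
    ((hu.comp (continuous_id.div_const _)).integral_hasStrictDerivAt 0 x).hasDerivAt.const_mul _
  have hφcont : Continuous φ := continuous_iff_continuousAt.2 fun x ↦ (hφ x).continuousAt
  have hw' (x : ℝ) : HasDerivAt w (Complex.exp (φ x)) x := by
    rw [funext hw]
    exact (hφcont.cexp.integral_hasStrictDerivAt 0 x).hasDerivAt.sub_const C
  have hα2 : 2 * α = -(Complex.I * μ) := by rw [hα]; ring
  have hcoeff : -4 * α * (1 - α ^ 2) =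
      (2 + Complex.I * μ) * (Complex.I * μ + μ ^ 2 / 2) := by
    rw [hα]
    linear_combination -(μ ^ 2 + Complex.I * μ ^ 3 / 2) * Complex.I_sq
  have hcpow : ∀ᶠ x : ℝ in atTop,
      Complex.exp (Complex.I * μ * Real.log x) = (x : ℂ) ^ (-(2 * α)) := by
    filter_upwards [eventually_gt_atTop 0] with x hx
    rw [ofReal_cpow_eq_exp_mul_log hx, hα2, neg_neg]
  have hmain := isBigO_deriv_mul_cpow_of_tendsto (by simpa [hα2] using hμ) (by norm_num)
    (.of_forall hw') (.of_forall hφ) (isBigO_two_div_cbrt3_mul_comp_div_sub hAp)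
    (hgp.congr' <| hcpow.mono fun x hx ↦ by rw [hx])
  refine hmain.congr' (hcpow.mono fun x hx ↦ ?_) (.of_forall fun x ↦ by norm_num)
  dsimp only
  rw [← hx, hcoeff, hα2]
  ring

/-- With `g₊ = lim_{x→+∞} g(x)`, one has
`w'(x) e^{iμ ln x} = (1-iμ) g₊ + (2+iμ)(1-iμ) g₊ (iμ + μ²/2) x⁻³ + O(x⁻⁶)` as `x → +∞`. -/
theorem stmt_8 (μ : ℝ) (α : ℂ) (hα : α = -Complex.I * μ / 2)
    (u : ℝ → ℂ) (hu : ContDiff ℝ (⊤ : ℕ∞) u)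
    (hP : ∀ x : ℝ, deriv (deriv u) x = (x : ℂ) * u x + 2 * (u x) ^ 3 - α)
    (him : ∀ x : ℝ, (u x).re = 0)
    (hAp : ∃ x₀ : ℝ, 0 < x₀ ∧ ∃ K : ℝ, 0 < K ∧ ∀ x : ℝ, x₀ ≤ x →
      ‖u x - α / x - 2 * α * (1 - α ^ 2) * (x : ℂ) ^ (-4 : ℤ)
        - 4 * α * (1 - α ^ 2) * (10 - 3 * α ^ 2) * (x : ℂ) ^ (-7 : ℤ)‖
        ≤ K * x ^ (-10 : ℤ))
    (Cc : ℂ)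
    (hC : Cc = (2 * cbrt3 / (1 - Complex.I * μ)) * (deriv u 0 - (u 0) ^ 2))
    (w : ℝ → ℂ)
    (hw : ∀ x : ℝ, w x =
      (∫ y in (0:ℝ)..x, Complex.exp (((2 / cbrt3 : ℝ) : ℂ) *
        ∫ z in (0:ℝ)..y, u (z / cbrt3))) - Cc)
    (g : ℝ → ℂ)
    (hg : ∀ x : ℝ, x ≠ 0 →
      g x = Complex.exp (Complex.I * μ * Real.log |x|) * w x / x)
    (gp : ℂ) (hgp : Filter.Tendsto g Filter.atTop (nhds gp)) :
    ∃ x₁ : ℝ, 0 < x₁ ∧ ∃ K' : ℝ, 0 < K' ∧ ∀ x : ℝ, x₁ ≤ x →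
      ‖deriv w x * Complex.exp (Complex.I * μ * Real.log x)
        - (1 - Complex.I * μ) * gp
        - (2 + Complex.I * μ) * (1 - Complex.I * μ) * gp *
            (Complex.I * μ + (μ:ℂ) ^ 2 / 2) * (x : ℂ) ^ (-3 : ℤ)‖
        ≤ K' * x ^ (-6 : ℤ) :=
  isBigO_zpow_atTop_iff.1 <| stmt_8_general (by simp) hα hu.continuous
    (isBigO_zpow_of_sub_const_mul_zpow (by norm_num) (isBigO_zpow_atTop_iff.2 hAp)) hw <|
    hgp.congr' <| (eventually_gt_atTop 0).mono fun x hx ↦ by rw [hg x hx.ne', abs_of_pos hx]
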